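/- For every n ≥ 2 there exists a word a over {0,1} such that s_{n+2} = a s_n s_{n−1} s_n. -/

import Mathlib

open scoped Classical

noncomputable section

/-- The Sturmian potential `v_{α,θ}(n) = χ_{[1-α,1)}(nα + θ mod 1)`. -/
def sturmian (α θ : ℝ) (n : ℤ) : ℝ :=
  if Int.fract (n * α + θ) ∈ Set.Ico (1 - α) 1 then 1 else 0

/-- Iterates of the Gauss map, starting at `α`. -/
def cfGauss (α : ℝ) : ℕ → ℝ
  | 0 => α
  | n + 1 => Int.fract (cfGauss α n)⁻¹

/-- The continued fraction coefficients `a_n` of `α = [a_1, a_2, …]` (for `n ≥ 1`):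
`a_1 = ⌊1/α⌋`, `a_2 = ⌊1/fract(1/α)⌋`, … . -/
def cfCoeff (α : ℝ) (n : ℕ) : ℕ := ⌊(cfGauss α (n - 1))⁻¹⌋₊

/-- The standard words, with an index shift: `sWord a n` is `s_{n-1}`.  Thus
`sWord a 0 = s_{-1} = 1`, `sWord a 1 = s_0 = 0`, `sWord a 2 = s_1 = 0^{a_1 - 1} 1`, and
`sWord a (n+1) = s_n = s_{n-1}^{a_n} s_{n-2}` for `n ≥ 2`. -/
def sWord (a : ℕ → ℕ) : ℕ → List ℝ
  | 0 => [1]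
  | 1 => [0]
  | 2 => List.replicate (a 1 - 1) (0 : ℝ) ++ [1]
  | n + 3 => (List.replicate (a (n + 2)) (sWord a (n + 2))).flatten ++ sWord a (n + 1)

/-- The `n`-th letter (for `n ≥ 1`) of the one-sided infinite word `c_α = lim s_n`:
since `|s_n| ≥ n`, it is the `n`-th letter of `s_n`. -/
def cword (α : ℝ) (n : ℕ) : ℝ := (sWord (cfCoeff α) (n + 1)).getD (n - 1) 0

/-- `w` is a (finite) prefix of the one-sided infinite word `c_α`. -/
def IsPrefC (α : ℝ) (w : List ℝ) : Prop :=
  w = (List.range w.length).map fun i => cword α (i + 1)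

/-- The one-step transfer matrix `T(λ,E,a) = [[E - λa, -1], [1, 0]]`. -/
def transferT (lam : ℝ) (E : ℂ) (a : ℝ) : Matrix (Fin 2) (Fin 2) ℂ :=
  !![E - lam * a, -1; 1, 0]

/-- The transfer matrix over a word `w = w_1 … w_n`:
`M(λ,E,w) = T(λ,E,w_n) ⋯ T(λ,E,w_1)`. -/
def transferM (lam : ℝ) (E : ℂ) : List ℝ → Matrix (Fin 2) (Fin 2) ℂ
  | [] => 1
  | a :: w => transferM lam E w * transferT lam E a

/-- The operator norm on `ℂ²` (with the euclidean norm) of a `2 × 2` complex matrix. -/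
def opNorm (A : Matrix (Fin 2) (Fin 2) ℂ) : ℝ :=
  ‖Matrix.toEuclideanCLM (𝕜 := ℂ) A‖

/-- The word `v_{α,θ}^n = v_{α,θ}(1) … v_{α,θ}(n)`. -/
def sturmianWord (α θ : ℝ) (n : ℕ) : List ℝ :=
  (List.range n).map fun k => sturmian α θ (k + 1)

/-- The set of finite nonempty subwords of a two-sided sequence `v : ℤ → ℝ`. -/
def SubZ (v : ℤ → ℝ) : Set (List ℝ) :=
  {w | w ≠ [] ∧ ∃ k : ℤ, w = (List.range w.length).map fun i => v (k + i)}

/-- The set of finite nonempty subwords of the one-sided word `c_α` (indexed from `1`). -/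
def SubC (α : ℝ) : Set (List ℝ) :=
  {w | w ≠ [] ∧ ∃ k : ℕ, 1 ≤ k ∧ w = (List.range w.length).map fun i => cword α (k + i)}

/-- `W_α`, the set of all finite nonempty subwords of the sequences `v_{α,θ}`, `θ ∈ [0,1)`. -/
def Walpha (α : ℝ) : Set (List ℝ) :=
  {w | ∃ θ ∈ Set.Ico (0 : ℝ) 1, w ∈ SubZ (sturmian α θ)}

/-- `α` is a bounded density number: `limsup_{n→∞} (1/n) ∑_{j=1}^n a_j < ∞` for the
continued fraction coefficients `a_j` of `α`. -/
def BoundedDensity (α : ℝ) : Prop :=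
  Filter.IsBoundedUnder (· ≤ ·) Filter.atTop
    (fun n : ℕ => (1 / n : ℝ) * ∑ j ∈ Finset.Icc 1 n, (cfCoeff α j : ℝ))

end

theorem cfGauss_irr (α : ℝ) (hirr : Irrational α) (hα : α ∈ Set.Ioo (0 : ℝ) 1) (n : ℕ) :
    Irrational (cfGauss α n) ∧ cfGauss α n ∈ Set.Ioo (0 : ℝ) 1 := by
  induction n with
  | zero => exact ⟨hirr, hα⟩
  | succ k ih =>
    have h : Irrational (cfGauss α (k + 1)) := by
      have h1 : Irrational (cfGauss α k)⁻¹ := ih.1.inv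
      have h2 := h1.sub_intCast ⌊(cfGauss α k)⁻¹⌋
      rw [cfGauss, Int.fract]
      exact h2
    refine ⟨h, lt_of_le_of_ne ?_ ?_, ?_⟩
    · rw [cfGauss]; exact Int.fract_nonneg _
    · exact fun h0 => h.ne_zero h0.symm
    · rw [cfGauss]; exact Int.fract_lt_one _

theorem cfCoeff_pos (α : ℝ) (hirr : Irrational α) (hα : α ∈ Set.Ioo (0 : ℝ) 1) (n : ℕ) :
    ∃ k, cfCoeff α n = k + 1 := by
  obtain ⟨-, h0, h1⟩ := cfGauss_irr α hirr hα (n - 1)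
  have : 0 < cfCoeff α n := by
    rw [cfCoeff, Nat.floor_pos]
    exact (one_le_inv₀ h0).2 h1.le
  exact ⟨cfCoeff α n - 1, by omega⟩

theorem sWord_succ (a : ℕ → ℕ) (m k : ℕ) (h : a (m + 2) = k + 1) :
    ∃ y, sWord a (m + 3) = y ++ sWord a (m + 2) ++ sWord a (m + 1) := by
  refine ⟨(List.replicate k (sWord a (m + 2))).flatten, ?_⟩
  rw [sWord, h, List.replicate_succ']
  simp

theorem sWord_tail_decomposition
    (α : ℝ) (hirr : Irrational α) (hα : α ∈ Set.Ioo (0 : ℝ) 1)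
    (n : ℕ) (hn : 2 ≤ n) :
    ∃ x : List ℝ, sWord (cfCoeff α) (n + 3) =
      x ++ sWord (cfCoeff α) (n + 1) ++ sWord (cfCoeff α) n ++ sWord (cfCoeff α) (n + 1) := by
  obtain ⟨m, rfl⟩ : ∃ m, n = m + 1 := ⟨n - 1, by omega⟩
  obtain ⟨k, hk⟩ := cfCoeff_pos α hirr hα (m + 1 + 2)
  obtain ⟨l, hl⟩ := cfCoeff_pos α hirr hα (m + 2)
  obtain ⟨y, hy⟩ := sWord_succ _ _ _ hk
  obtain ⟨z, hz⟩ := sWord_succ _ _ _ hl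
  refine ⟨y ++ z, ?_⟩
  rw [hy, show m + 1 + 2 = m + 3 from rfl, hz]
  simp [List.append_assoc]
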